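/- The optimal constant C_S in the inequality ‖η − η̄‖_{L∞(T²)} ≤ C_S ‖Δη‖_{L²(T²)} for η ∈ H²(T²) is given by C_S = (2π)^{-2} (∑_{k ∈ Z²\{0}} |k|^{-4})^{1/2}. -/

import Mathlib

/-!
On the torus the Laplacian is the Fourier multiplier `λ_k = -4π²|k|²`. Expanding `η` in its Fourier
series, `|η - η̄| ≤ ∑_{k ≠ 0} |η̂(k)| = ∑_{k ≠ 0} |λ_k|⁻¹ |(Δη)^(k)|`, and the Cauchy–Schwarz
inequality together with Parseval's identity gives the constant `K = (∑_{k ≠ 0} λ_k⁻²)^{1/2}`.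
Equality in Cauchy–Schwarz at `x = 0` requires `η̂(k) = λ_k⁻²`. Truncated to a finite set `S`, this
choice is a cosine polynomial whose value at `0` is `s = ∑_{k ∈ S} λ_k⁻²` and whose Laplacian has
squared `L²` norm at most `s`. Hence any admissible constant `C` satisfies `s ≤ C √s`, and letting
`S` exhaust the lattice yields `K² ≤ C K`.
-/

open MeasureTheory Real Set

noncomputable section

/-- Fundamental domain of the flat unit torus `T² = ℝ²/ℤ²` (unit area). -/
def T2 : Set (ℝ × ℝ) := Set.Icc 0 1 ×ˢ Set.Icc 0 1

/-- A function on `ℝ²` descends to the torus `T²` iff it is `ℤ²`-periodic. -/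
def Periodic2 (f : ℝ × ℝ → ℝ) : Prop :=
  ∀ x : ℝ × ℝ, ∀ k : ℤ × ℤ, f (x.1 + k.1, x.2 + k.2) = f x

/-- First partial derivative. -/
def d1 (f : ℝ × ℝ → ℝ) (x : ℝ × ℝ) : ℝ := deriv (fun s => f (s, x.2)) x.1

/-- Second partial derivative. -/
def d2 (f : ℝ × ℝ → ℝ) (x : ℝ × ℝ) : ℝ := deriv (fun s => f (x.1, s)) x.2

/-- Laplacian on `T²`. -/
def lap (f : ℝ × ℝ → ℝ) : ℝ × ℝ → ℝ := fun x => d1 (d1 f) x + d2 (d2 f) x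

/-- Mean value over `T²` (which has unit area). -/
def meanT2 (f : ℝ × ℝ → ℝ) : ℝ := ∫ x in T2, f x

/-- Square of the `L²(T²)` norm. -/
def L2normSq (f : ℝ × ℝ → ℝ) : ℝ := ∫ x in T2, (f x) ^ 2

/-- The lattice sum `∑_{k ∈ ℤ²\{0}} |k|⁻⁴`. -/
def latticeSum : ℝ :=
  ∑' k : ℤ × ℤ, if k = 0 then 0 else 1 / (((k.1 : ℝ) ^ 2 + (k.2 : ℝ) ^ 2) ^ 2)

open UnitAddTorus

/-! ### Fourier series on `UnitAddTorus d` -/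

-- Mathlib's results on `UnitAddTorus` are about the product of the Haar probability measures, which
-- are not the global `volume` instances.
local instance : MeasureSpace UnitAddCircle := ⟨AddCircle.haarAddCircle⟩

local instance : IsProbabilityMeasure (volume : Measure UnitAddCircle) :=
  inferInstanceAs (IsProbabilityMeasure AddCircle.haarAddCircle)

lemma summable_and_tsum_mul_le_sqrt_mul_sqrt {ι : Type*} {f g : ι → ℝ} (hf : ∀ i, 0 ≤ f i)
    (hg : ∀ i, 0 ≤ g i) (hf2 : Summable fun i => f i ^ 2) (hg2 : Summable fun i => g i ^ 2) :
    (Summable fun i => f i * g i) ∧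
      ∑' i, f i * g i ≤ √(∑' i, f i ^ 2) * √(∑' i, g i ^ 2) := by
  simp only [Real.sqrt_eq_rpow, ← Real.rpow_two] at hf2 hg2 ⊢
  exact Real.summable_and_inner_le_Lp_mul_Lq_tsum_of_nonneg Real.HolderConjugate.two_two
    hf hg hf2 hg2

lemma norm_sq_toLp_eq_integral {X 𝕜 : Type*} [RCLike 𝕜] [TopologicalSpace X] [CompactSpace X]
    [MeasurableSpace X] [BorelSpace X] (μ : Measure X) [IsFiniteMeasure μ] (F : C(X, 𝕜)) :
    ‖F.toLp 2 μ 𝕜‖ ^ 2 = ∫ t, ‖F t‖ ^ 2 ∂μ := by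
  have h := inner_self_eq_norm_sq_to_K (𝕜 := 𝕜) (F.toLp 2 μ 𝕜)
  simp only [ContinuousMap.inner_toLp, RCLike.mul_conj] at h
  norm_cast at h
  exact h.symm

section UnitAddTorus

variable {d : Type*} [Fintype d]

lemma hasSum_sq_norm_mFourierCoeff (F : C(UnitAddTorus d, ℂ)) :
    HasSum (fun k => ‖mFourierCoeff F k‖ ^ 2) (∫ t, ‖F t‖ ^ 2) := by
  have h := hasSum_sq_mFourierCoeff (F.toLp 2 volume ℂ)
  simp only [mFourierCoeff_toLp] at h
  convert h using 1
  refine integral_congr_ae ?_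
  filter_upwards [F.coeFn_toLp (p := 2) (𝕜 := ℂ) volume] with t ht
  rw [ht]

lemma integral_norm_sq_sum_smul_mFourier (S : Finset (d → ℤ)) (a : (d → ℤ) → ℂ) :
    ∫ t, ‖(∑ k ∈ S, a k • mFourier k : C(UnitAddTorus d, ℂ)) t‖ ^ 2 = ∑ k ∈ S, ‖a k‖ ^ 2 := by
  have h := orthonormal_mFourier.inner_sum a a S
  simp only [inner_self_eq_norm_sq_to_K, RCLike.conj_mul] at h
  rw [← norm_sq_toLp_eq_integral]
  simp only [map_sum, map_smul]
  exact_mod_cast h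

lemma integral_mFourier_eq_zero {k : d → ℤ} (hk : k ≠ 0) : ∫ t, mFourier k t = 0 := by
  have h := orthonormal_mFourier.inner_eq_zero hk.symm
  simpa [ContinuousMap.inner_toLp, mFourier_zero] using h

lemma norm_sub_mFourierCoeff_zero_le_tsum {F : C(UnitAddTorus d, ℂ)} {b : (d → ℤ) → ℝ}
    (hb : Summable b) (hb0 : 0 ≤ b 0) (hF : ∀ k ≠ 0, ‖mFourierCoeff F k‖ ≤ b k)
    (x : UnitAddTorus d) : ‖F x - mFourierCoeff F 0‖ ≤ ∑' k, b k := by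
  classical
  have hsum : Summable (mFourierCoeff F) := by
    refine hb.of_norm_bounded_eventually ?_
    filter_upwards [(finite_singleton (0 : d → ℤ)).compl_mem_cofinite] with k hk
    exact hF k hk
  have hseries := (hasSum_mFourier_series_apply_of_summable hsum x).sub
    (hasSum_ite_eq (0 : d → ℤ) (mFourierCoeff F 0))
  rw [← hseries.tsum_eq]
  refine tsum_of_norm_bounded hb.hasSum fun k => ?_
  by_cases hk : k = 0
  · simpa [hk, mFourier_zero] using hb0
  · simp only [hk, if_false, sub_zero, norm_smul]
    exact (mul_le_of_le_one_right (norm_nonneg _)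
      ((ContinuousMap.norm_coe_le_norm _ x).trans mFourier_norm.le)).trans (hF k hk)

-- The possible term `k = 0` on the right vanishes when `σ 0 = 0`, because `0⁻¹ = 0`.
lemma norm_sub_mFourierCoeff_zero_le_of_multiplier {F G : C(UnitAddTorus d, ℂ)}
    {σ : (d → ℤ) → ℂ} (hσ : ∀ k ≠ 0, σ k ≠ 0) (hσ2 : Summable fun k => (‖σ k‖ ^ 2)⁻¹)
    (hFG : ∀ k ≠ 0, mFourierCoeff G k = σ k * mFourierCoeff F k) (x : UnitAddTorus d) :
    ‖F x - mFourierCoeff F 0‖ ≤ √(∑' k, (‖σ k‖ ^ 2)⁻¹) * √(∫ t, ‖G t‖ ^ 2) := by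
  have hparseval := hasSum_sq_norm_mFourierCoeff G
  simp only [← inv_pow] at hσ2 ⊢
  obtain ⟨hsum, hCS⟩ := summable_and_tsum_mul_le_sqrt_mul_sqrt
    (fun k => inv_nonneg.mpr (norm_nonneg (σ k))) (fun k => norm_nonneg (mFourierCoeff G k))
    hσ2 hparseval.summable
  rw [hparseval.tsum_eq] at hCS
  refine (norm_sub_mFourierCoeff_zero_le_tsum hsum (by positivity) (fun k hk => ?_) x).trans hCS
  rw [hFG k hk, norm_mul, inv_mul_cancel_left₀ (norm_ne_zero_iff.mpr (hσ k hk))]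

end UnitAddTorus

/-! ### The projection of the plane onto the torus -/

/-- The covering map `ℝ² → ℝ²/ℤ²`, through which functions of `ℝ × ℝ` are compared with functions
on Mathlib's torus. -/
def toTorus (x : ℝ × ℝ) : UnitAddTorus (Fin 2) := ![(x.1 : UnitAddCircle), (x.2 : UnitAddCircle)]

lemma isQuotientMap_toTorus : Topology.IsQuotientMap toTorus := by
  have hmk : IsOpenQuotientMap ((↑) : ℝ → UnitAddCircle) := QuotientAddGroup.isOpenQuotientMap_mk
  have hpi : IsOpenQuotientMap (Pi.map fun _ : Fin 2 => ((↑) : ℝ → UnitAddCircle)) :=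
    IsOpenQuotientMap.piMap fun _ => hmk
  convert hpi.isQuotientMap.comp Homeomorph.finTwoArrow.symm.isQuotientMap
  ext x i
  fin_cases i <;> rfl

lemma continuous_toTorus : Continuous toTorus := isQuotientMap_toTorus.continuous

lemma toTorus_eq_toTorus_iff {x y : ℝ × ℝ} :
    toTorus x = toTorus y ↔ ∃ k : ℤ × ℤ, x = (y.1 + k.1, y.2 + k.2) := by
  have hmk : ∀ a b : ℝ, (a : UnitAddCircle) = b ↔ ∃ n : ℤ, a = b + n := fun a b => by
    simp [QuotientAddGroup.eq_iff_sub_mem, AddSubgroup.mem_zmultiples_iff, sub_eq_iff_eq_add',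
      eq_comm (b := a - b)]
  simp [toTorus, hmk, Prod.ext_iff]

lemma Periodic2.exists_comp_toTorus_eq {f : ℝ × ℝ → ℝ} (hper : Periodic2 f) (hf : Continuous f) :
    ∃ F : C(UnitAddTorus (Fin 2), ℂ), ∀ x, F (toTorus x) = f x := by
  let q : C(ℝ × ℝ, UnitAddTorus (Fin 2)) := ⟨toTorus, continuous_toTorus⟩
  have hq : Topology.IsQuotientMap q := isQuotientMap_toTorus
  let fC : C(ℝ × ℝ, ℂ) := ⟨fun x => f x, by fun_prop⟩
  have hfactor : Function.FactorsThrough fC q := by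
    intro x y hxy
    obtain ⟨k, rfl⟩ := toTorus_eq_toTorus_iff.mp hxy
    exact congrArg ((↑) : ℝ → ℂ) (hper y k)
  exact ⟨hq.lift fC hfactor, fun x => DFunLike.congr_fun (hq.lift_comp fC hfactor) x⟩

lemma integral_unitAddTorus_eq_setIntegral_T2 {E : Type*} [NormedAddCommGroup E] [NormedSpace ℝ E]
    (F : UnitAddTorus (Fin 2) → E) : ∫ t, F t = ∫ x in T2, F (toTorus x) := by
  have hdomain : {x : Fin 2 → ℝ | ∀ i, x i ∈ Ioc ((0 : Fin 2 → ℝ) i) ((0 : Fin 2 → ℝ) i + 1)} =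
      MeasurableEquiv.finTwoArrow ⁻¹' (Ioc (0 : ℝ) 1 ×ˢ Ioc (0 : ℝ) 1) := by
    ext x
    simp [Fin.forall_fin_two, MeasurableEquiv.finTwoArrow]
  have hproj : ∀ x : Fin 2 → ℝ, (fun i => (x i : UnitAddCircle)) =
      toTorus (MeasurableEquiv.finTwoArrow x) := by
    intro x
    ext i
    fin_cases i <;> rfl
  have hIoc : (Ioc (0 : ℝ) 1 ×ˢ Ioc (0 : ℝ) 1 : Set (ℝ × ℝ)) =ᵐ[volume] T2 :=
    Measure.set_prod_ae_eq Ioc_ae_eq_Icc Ioc_ae_eq_Icc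
  rw [integral_preimage F 0, hdomain, ← setIntegral_congr_set hIoc,
    ← (volume_preserving_finTwoArrow ℝ).setIntegral_preimage_emb
      (MeasurableEquiv.measurableEmbedding _)]
  simp only [hproj]

lemma mFourier_toTorus (k : Fin 2 → ℤ) (x : ℝ × ℝ) :
    mFourier k (toTorus x) =
      fourier (k 0) (x.1 : UnitAddCircle) * fourier (k 1) (x.2 : UnitAddCircle) := by
  simp [mFourier, toTorus]

/-! ### Integration over the fundamental domain -/

lemma integrableOn_T2 {E : Type*} [NormedAddCommGroup E] {f : ℝ × ℝ → E} (hf : Continuous f) :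
    IntegrableOn f T2 :=
  hf.continuousOn.integrableOn_compact (isCompact_Icc.prod isCompact_Icc)

lemma setIntegral_T2_comp_swap {E : Type*} [NormedAddCommGroup E] [NormedSpace ℝ E]
    (f : ℝ × ℝ → E) : ∫ x in T2, f x.swap = ∫ x in T2, f x :=
  setIntegral_prod_swap _ _ f

lemma setIntegral_T2_eq_intervalIntegral {E : Type*} [NormedAddCommGroup E] [NormedSpace ℝ E]
    {f : ℝ × ℝ → E} (hf : Continuous f) :
    ∫ x in T2, f x = ∫ t in (0 : ℝ)..1, ∫ s in (0 : ℝ)..1, f (s, t) := by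
  rw [← setIntegral_T2_comp_swap]
  simp only [intervalIntegral.integral_of_le zero_le_one, ← integral_Icc_eq_integral_Ioc]
  exact setIntegral_prod _ (integrableOn_T2 (hf.comp continuous_swap))

lemma intervalIntegral_fourier_neg_mul_deriv {T a : ℝ} {u u' : ℝ → ℂ} (n : ℤ)
    (hu : ∀ x ∈ uIcc a (a + T), HasDerivAt u (u' x) x)
    (hu' : IntervalIntegrable u' volume a (a + T)) (hper : u (a + T) = u a) :
    ∫ x in a..a + T, fourier (-n) (x : AddCircle T) * u' x =
      2 * π * Complex.I * n / T * ∫ x in a..a + T, fourier (-n) (x : AddCircle T) * u x := by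
  have hderiv := fun x (_ : x ∈ uIcc a (a + T)) => hasDerivAt_fourier_neg T n x
  rw [intervalIntegral.integral_mul_deriv_eq_deriv_mul hderiv hu
      (Continuous.intervalIntegrable (by fun_prop) _ _) hu',
    AddCircle.coe_add_period, hper, sub_self, zero_sub, ← intervalIntegral.integral_neg,
    ← intervalIntegral.integral_const_mul]
  refine intervalIntegral.integral_congr fun x _ => ?_
  ring

/-! ### Partial derivatives and the Laplacian -/

-- Statements about `d2` and `lap` are deduced from those about `d1` by exchanging the coordinates.
lemma lap_eq_d1_d1_add_comp_swap (f : ℝ × ℝ → ℝ) :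
    lap f = fun x => d1 (d1 f) x + (d1 (d1 (f ∘ Prod.swap)) ∘ Prod.swap) x := rfl

lemma Periodic2.comp_swap {f : ℝ × ℝ → ℝ} (hper : Periodic2 f) : Periodic2 (f ∘ Prod.swap) :=
  fun x k => hper x.swap k.swap

protected lemma Periodic2.d1 {f : ℝ × ℝ → ℝ} (hper : Periodic2 f) : Periodic2 (d1 f) := by
  intro x k
  have hslice : (fun s => f (s + k.1, x.2 + k.2)) = fun s => f (s, x.2) :=
    funext fun s => hper (s, x.2) k
  rw [d1, d1, ← hslice]
  exact (deriv_comp_add_const (fun s => f (s, x.2 + k.2)) k.1 x.1).symm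

protected lemma Periodic2.d2 {f : ℝ × ℝ → ℝ} (hper : Periodic2 f) : Periodic2 (d2 f) :=
  hper.comp_swap.d1.comp_swap

protected lemma Periodic2.lap {f : ℝ × ℝ → ℝ} (hper : Periodic2 f) : Periodic2 (lap f) := fun x k =>
  congrArg₂ (· + ·) (hper.d1.d1 x k) (hper.d2.d2 x k)

lemma hasDerivAt_d1 {f : ℝ × ℝ → ℝ} {x : ℝ × ℝ} (hf : DifferentiableAt ℝ f x) :
    HasDerivAt (fun s => f (s, x.2)) (d1 f x) x.1 :=
  (hf.comp x.1 (differentiableAt_id.prodMk (differentiableAt_const x.2))).hasDerivAt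

lemma d1_eq_fderiv {f : ℝ × ℝ → ℝ} (hf : Differentiable ℝ f) :
    d1 f = fun x => fderiv ℝ f x (1, 0) := by
  ext x
  exact ((hf x).hasFDerivAt.comp_hasDerivAt x.1
    ((hasDerivAt_id x.1).prodMk (hasDerivAt_const x.1 x.2))).deriv

lemma contDiff_d1 {m n : WithTop ℕ∞} {f : ℝ × ℝ → ℝ} (hf : ContDiff ℝ n f) (hmn : m + 1 ≤ n) :
    ContDiff ℝ m (d1 f) := by
  have hn : n ≠ 0 := by
    rintro rfl
    simp at hmn
  rw [d1_eq_fderiv (hf.differentiable hn)]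
  exact (hf.fderiv_right hmn).clm_apply contDiff_const

lemma continuous_d1 {f : ℝ × ℝ → ℝ} (hf : ContDiff ℝ 1 f) : Continuous (d1 f) :=
  (contDiff_d1 (m := 0) hf (by norm_num)).continuous

lemma continuous_d1_d1 {f : ℝ × ℝ → ℝ} (hf : ContDiff ℝ 2 f) : Continuous (d1 (d1 f)) :=
  continuous_d1 (contDiff_d1 hf (by norm_num))

lemma contDiff_comp_swap {n : WithTop ℕ∞} {f : ℝ × ℝ → ℝ} (hf : ContDiff ℝ n f) :
    ContDiff ℝ n (f ∘ Prod.swap) :=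
  hf.comp (contDiff_snd.prodMk contDiff_fst)

lemma continuous_lap {f : ℝ × ℝ → ℝ} (hf : ContDiff ℝ 2 f) : Continuous (lap f) :=
  (continuous_d1_d1 hf).add ((continuous_d1_d1 (contDiff_comp_swap hf)).comp continuous_swap)

lemma d1_const_mul (c : ℝ) (f : ℝ × ℝ → ℝ) : d1 (fun x => c * f x) = fun x => c * d1 f x :=
  funext fun _ => deriv_const_mul_field c

lemma lap_const_mul (c : ℝ) (f : ℝ × ℝ → ℝ) : lap (fun x => c * f x) = fun x => c * lap f x := by
  simp only [lap_eq_d1_d1_add_comp_swap, Function.comp_def, d1_const_mul, mul_add]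

lemma d1_sum {ι : Type*} {S : Finset ι} {f : ι → ℝ × ℝ → ℝ}
    (hf : ∀ i ∈ S, Differentiable ℝ (f i)) :
    d1 (fun x => ∑ i ∈ S, f i x) = fun x => ∑ i ∈ S, d1 (f i) x :=
  funext fun x => (HasDerivAt.fun_sum fun i hi => hasDerivAt_d1 (hf i hi x)).deriv

lemma lap_sum {ι : Type*} {S : Finset ι} {f : ι → ℝ × ℝ → ℝ}
    (hf : ∀ i ∈ S, ContDiff ℝ 2 (f i)) :
    lap (fun x => ∑ i ∈ S, f i x) = fun x => ∑ i ∈ S, lap (f i) x := by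
  have hd1d1 : ∀ g : ι → ℝ × ℝ → ℝ, (∀ i ∈ S, ContDiff ℝ 2 (g i)) →
      d1 (d1 fun x => ∑ i ∈ S, g i x) = fun x => ∑ i ∈ S, d1 (d1 (g i)) x := fun g hg => by
    rw [d1_sum fun i hi => (hg i hi).differentiable two_ne_zero,
      d1_sum fun i hi => (contDiff_d1 (m := 1) (hg i hi) (by norm_num)).differentiable one_ne_zero]
  have hswap := hd1d1 (fun i => f i ∘ Prod.swap) fun i hi => contDiff_comp_swap (hf i hi)
  simp only [Function.comp_def] at hswap
  simp only [lap_eq_d1_d1_add_comp_swap, Function.comp_def, hd1d1 f hf, hswap,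
    Finset.sum_add_distrib]

/-! ### The Laplacian as a Fourier multiplier -/

/-- The Fourier coefficient `f̂(k) = ∫_{T²} f(x) e^{-2πik·x} dx` of a function on the plane, taken
over the fundamental domain `T2`. -/
def fourierCoeffT2 (f : ℝ × ℝ → ℝ) (k : Fin 2 → ℤ) : ℂ :=
  ∫ x in T2, mFourier (-k) (toTorus x) * f x

lemma mFourierCoeff_eq_fourierCoeffT2 {F : UnitAddTorus (Fin 2) → ℂ} {f : ℝ × ℝ → ℝ}
    (hF : ∀ x, F (toTorus x) = f x) (k : Fin 2 → ℤ) : mFourierCoeff F k = fourierCoeffT2 f k := by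
  simp only [mFourierCoeff, integral_unitAddTorus_eq_setIntegral_T2, hF, smul_eq_mul,
    fourierCoeffT2]

lemma fourierCoeffT2_zero (f : ℝ × ℝ → ℝ) : fourierCoeffT2 f 0 = meanT2 f := by
  simp [fourierCoeffT2, meanT2, mFourier_zero, integral_complex_ofReal]

lemma fourierCoeffT2_comp_swap (f : ℝ × ℝ → ℝ) (k : Fin 2 → ℤ) :
    fourierCoeffT2 (f ∘ Prod.swap) k = fourierCoeffT2 f ![k 1, k 0] := by
  rw [fourierCoeffT2, ← setIntegral_T2_comp_swap]
  simp [fourierCoeffT2, mFourier_toTorus, mul_comm]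

lemma fourierCoeffT2_add {f g : ℝ × ℝ → ℝ} (hf : Continuous f) (hg : Continuous g)
    (k : Fin 2 → ℤ) :
    fourierCoeffT2 (fun x => f x + g x) k = fourierCoeffT2 f k + fourierCoeffT2 g k := by
  have hq := continuous_toTorus
  simp only [fourierCoeffT2, Complex.ofReal_add, mul_add]
  exact integral_add (integrableOn_T2 (by fun_prop)) (integrableOn_T2 (by fun_prop))

lemma fourierCoeffT2_d1 {f : ℝ × ℝ → ℝ} (hper : Periodic2 f) (hf : ContDiff ℝ 1 f)
    (k : Fin 2 → ℤ) : fourierCoeffT2 (d1 f) k = 2 * π * Complex.I * k 0 * fourierCoeffT2 f k := by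
  have hcont := hf.continuous
  have hcont' := continuous_d1 hf
  have hq := continuous_toTorus
  have hslice : ∀ t : ℝ, ∫ s in (0 : ℝ)..1, fourier (-k 0) (s : UnitAddCircle) * (d1 f (s, t) : ℂ) =
      2 * π * Complex.I * k 0 *
        ∫ s in (0 : ℝ)..1, fourier (-k 0) (s : UnitAddCircle) * (f (s, t) : ℂ) := fun t => by
    have h := intervalIntegral_fourier_neg_mul_deriv (T := 1) (a := 0)
      (u := fun s => (f (s, t) : ℂ)) (u' := fun s => (d1 f (s, t) : ℂ)) (k 0)
      (fun s _ => (hasDerivAt_d1 (hf.differentiable one_ne_zero (s, t))).ofReal_comp)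
      (Continuous.intervalIntegrable (by fun_prop) _ _)
      (congrArg ((↑) : ℝ → ℂ) (by simpa using hper (0, t) (1, 0)))
    simpa using h
  rw [fourierCoeffT2, fourierCoeffT2, setIntegral_T2_eq_intervalIntegral (by fun_prop),
    setIntegral_T2_eq_intervalIntegral (by fun_prop), ← intervalIntegral.integral_const_mul]
  simp only [mFourier_toTorus, Pi.neg_apply, mul_right_comm _ (fourier (-k 1) _),
    intervalIntegral.integral_mul_const, hslice]
  simp only [mul_assoc]

lemma fourierCoeffT2_d1_d1 {f : ℝ × ℝ → ℝ} (hper : Periodic2 f) (hf : ContDiff ℝ 2 f)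
    (k : Fin 2 → ℤ) : fourierCoeffT2 (d1 (d1 f)) k = -(2 * π * k 0) ^ 2 * fourierCoeffT2 f k := by
  rw [fourierCoeffT2_d1 hper.d1 (contDiff_d1 hf (by norm_num)),
    fourierCoeffT2_d1 hper (hf.of_le one_le_two)]
  linear_combination (2 * π * k 0) ^ 2 * fourierCoeffT2 f k * Complex.I_sq

/-- The eigenvalue `-4π²|k|²` of the Laplacian on the character `e^{2πik·x}`. -/
def lapEigenvalue (k : Fin 2 → ℤ) : ℝ := -((2 * π) ^ 2 * ((k 0 : ℝ) ^ 2 + (k 1 : ℝ) ^ 2))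

lemma fourierCoeffT2_lap {f : ℝ × ℝ → ℝ} (hper : Periodic2 f) (hf : ContDiff ℝ 2 f)
    (k : Fin 2 → ℤ) : fourierCoeffT2 (lap f) k = lapEigenvalue k * fourierCoeffT2 f k := by
  have hf' := contDiff_comp_swap hf
  have hk : ![k 0, k 1] = k := by
    ext i
    fin_cases i <;> rfl
  have hswap : fourierCoeffT2 (d1 (d1 (f ∘ Prod.swap)) ∘ Prod.swap) k =
      -(2 * π * k 1) ^ 2 * fourierCoeffT2 f k := by
    rw [fourierCoeffT2_comp_swap, fourierCoeffT2_d1_d1 hper.comp_swap hf',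
      fourierCoeffT2_comp_swap]
    simp only [Matrix.cons_val_zero, Matrix.cons_val_one, hk]
  rw [lap_eq_d1_d1_add_comp_swap, fourierCoeffT2_add (continuous_d1_d1 hf)
    ((continuous_d1_d1 hf').comp continuous_swap), fourierCoeffT2_d1_d1 hper hf, hswap,
    lapEigenvalue]
  push_cast
  ring

lemma sq_norm_le_abs_lapEigenvalue (k : Fin 2 → ℤ) : ‖k‖ ^ 2 ≤ |lapEigenvalue k| := by
  have hnorm : ‖k‖ ≤ √((k 0 : ℝ) ^ 2 + (k 1 : ℝ) ^ 2) := by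
    refine (pi_norm_le_iff_of_nonneg (Real.sqrt_nonneg _)).mpr fun i => Real.le_sqrt_of_sq_le ?_
    rw [Int.norm_eq_abs, sq_abs]
    fin_cases i
    · exact le_add_of_nonneg_right (sq_nonneg _)
    · exact le_add_of_nonneg_left (sq_nonneg _)
  rw [lapEigenvalue, abs_neg, abs_of_nonneg (by positivity)]
  calc ‖k‖ ^ 2 ≤ (k 0 : ℝ) ^ 2 + (k 1 : ℝ) ^ 2 :=
        (Real.le_sqrt (norm_nonneg _) (by positivity)).mp hnorm
    _ ≤ (2 * π) ^ 2 * ((k 0 : ℝ) ^ 2 + (k 1 : ℝ) ^ 2) :=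
        le_mul_of_one_le_left (by positivity) (one_le_pow₀ (by linarith [Real.pi_gt_three]))

lemma lapEigenvalue_ne_zero {k : Fin 2 → ℤ} (hk : k ≠ 0) : lapEigenvalue k ≠ 0 :=
  abs_pos.mp ((pow_pos (norm_pos_iff.mpr hk) 2).trans_le (sq_norm_le_abs_lapEigenvalue k))

lemma summable_inv_sq_lapEigenvalue : Summable fun k => (lapEigenvalue k ^ 2)⁻¹ := by
  refine Summable.of_nonneg_of_le (fun k => by positivity) (fun k => ?_)
    (EisensteinSeries.summable_one_div_norm_rpow (k := 4) (by norm_num))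
  rcases eq_or_ne k 0 with rfl | hk
  · simp [lapEigenvalue]
  have hk' : 0 < ‖k‖ := norm_pos_iff.mpr hk
  rw [Real.rpow_neg hk'.le]
  refine inv_anti₀ (by positivity) ?_
  calc ‖k‖ ^ (4 : ℝ) = (‖k‖ ^ 2) ^ 2 := by rw [← pow_mul]; exact_mod_cast Real.rpow_natCast ‖k‖ 4
    _ ≤ |lapEigenvalue k| ^ 2 := by gcongr; exact sq_norm_le_abs_lapEigenvalue k
    _ = lapEigenvalue k ^ 2 := sq_abs _

lemma sqrt_tsum_inv_sq_lapEigenvalue :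
    √(∑' k, (lapEigenvalue k ^ 2)⁻¹) = ((2 * π) ^ 2)⁻¹ * √latticeSum := by
  have hterm : ∀ k : Fin 2 → ℤ, (lapEigenvalue k ^ 2)⁻¹ =
      (((2 * π) ^ 2)⁻¹) ^ 2 * if finTwoArrowEquiv ℤ k = 0 then 0 else
        1 / (((k 0 : ℝ) ^ 2 + (k 1 : ℝ) ^ 2) ^ 2) := by
    intro k
    rw [lapEigenvalue, neg_sq, mul_pow, mul_inv, inv_pow, ← one_div (((k 0 : ℝ) ^ 2 + _) ^ 2)]
    split_ifs with hk
    · have h0 : k 0 = 0 := congrArg Prod.fst hk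
      have h1 : k 1 = 0 := congrArg Prod.snd hk
      simp [h0, h1]
    · rfl
  have hlattice : ∑' k : Fin 2 → ℤ, (if finTwoArrowEquiv ℤ k = 0 then 0 else
      1 / (((k 0 : ℝ) ^ 2 + (k 1 : ℝ) ^ 2) ^ 2)) = latticeSum :=
    (finTwoArrowEquiv ℤ).tsum_eq fun k : ℤ × ℤ =>
      if k = 0 then 0 else 1 / (((k.1 : ℝ) ^ 2 + (k.2 : ℝ) ^ 2) ^ 2)
  simp only [hterm]
  rw [tsum_mul_left, hlattice, Real.sqrt_mul (sq_nonneg _), Real.sqrt_sq (by positivity)]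

/-! ### The inequality -/

lemma abs_sub_meanT2_le {f : ℝ × ℝ → ℝ} (hper : Periodic2 f) (hf : ContDiff ℝ 2 f) (x : ℝ × ℝ) :
    |f x - meanT2 f| ≤ √(∑' k, (lapEigenvalue k ^ 2)⁻¹) * √(L2normSq (lap f)) := by
  obtain ⟨F, hF⟩ := hper.exists_comp_toTorus_eq hf.continuous
  obtain ⟨G, hG⟩ := hper.lap.exists_comp_toTorus_eq (continuous_lap hf)
  have hnorm : ∀ k, ‖(lapEigenvalue k : ℂ)‖ ^ 2 = lapEigenvalue k ^ 2 := fun k => by simp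
  have hmult : ∀ k, mFourierCoeff G k = lapEigenvalue k * mFourierCoeff F k := fun k => by
    rw [mFourierCoeff_eq_fourierCoeffT2 hF, mFourierCoeff_eq_fourierCoeffT2 hG,
      fourierCoeffT2_lap hper hf]
  have h := norm_sub_mFourierCoeff_zero_le_of_multiplier
    (fun k hk => Complex.ofReal_ne_zero.mpr (lapEigenvalue_ne_zero hk))
    (by simpa only [hnorm] using summable_inv_sq_lapEigenvalue) (fun k _ => hmult k) (toTorus x)
  have hL2 : ∫ t, ‖G t‖ ^ 2 = L2normSq (lap f) := by
    simp [integral_unitAddTorus_eq_setIntegral_T2, hG, L2normSq]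
  rw [hF, mFourierCoeff_eq_fourierCoeffT2 hF, fourierCoeffT2_zero, hL2, ← Complex.ofReal_sub,
    Complex.norm_real, Real.norm_eq_abs] at h
  simpa only [hnorm] using h

/-! ### Cosine polynomials and optimality -/

/-- The real part `cos(2πk·x)` of the character `e^{2πik·x}`, as a function on the plane. -/
def cosWave (k : Fin 2 → ℤ) (x : ℝ × ℝ) : ℝ := Real.cos (2 * π * (k 0 * x.1 + k 1 * x.2))

/-- The cosine polynomial `∑_{k ∈ S} a_k cos(2πk·x)`; the extremal functions of the inequality are
approximated by such polynomials. -/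
def cosPoly (S : Finset (Fin 2 → ℤ)) (a : (Fin 2 → ℤ) → ℝ) (x : ℝ × ℝ) : ℝ :=
  ∑ k ∈ S, a k * cosWave k x

lemma periodic2_cosWave (k : Fin 2 → ℤ) : Periodic2 (cosWave k) := by
  intro x n
  rw [cosWave, cosWave, ← Real.cos_add_int_mul_two_pi (2 * π * (k 0 * x.1 + k 1 * x.2))
    (k 0 * n.1 + k 1 * n.2)]
  push_cast
  ring_nf

lemma contDiff_cosWave (k : Fin 2 → ℤ) {n : WithTop ℕ∞} : ContDiff ℝ n (cosWave k) := by
  unfold cosWave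
  fun_prop

lemma cosWave_comp_swap (k : Fin 2 → ℤ) : cosWave k ∘ Prod.swap = cosWave ![k 1, k 0] := by
  ext x
  simp [cosWave, add_comm]

lemma re_mFourier_toTorus (k : Fin 2 → ℤ) (x : ℝ × ℝ) :
    (mFourier k (toTorus x)).re = cosWave k x := by
  rw [mFourier_toTorus, fourier_coe_apply, fourier_coe_apply, ← Complex.exp_add, cosWave,
    ← Complex.exp_ofReal_mul_I_re]
  congr 2
  push_cast
  ring

lemma d1_d1_cosWave (k : Fin 2 → ℤ) :
    d1 (d1 (cosWave k)) = fun x => -(2 * π * k 0) ^ 2 * cosWave k x := by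
  have hphase : ∀ x : ℝ × ℝ,
      HasDerivAt (fun s : ℝ => 2 * π * (k 0 * s + k 1 * x.2)) (2 * π * k 0) x.1 := fun x => by
    simpa using (((hasDerivAt_id x.1).const_mul (k 0 : ℝ)).add_const (k 1 * x.2)).const_mul (2 * π)
  have hd1 : d1 (cosWave k) =
      fun x => -(2 * π * k 0) * Real.sin (2 * π * (k 0 * x.1 + k 1 * x.2)) := by
    ext x
    exact (hphase x).cos.deriv.trans (by ring)
  ext x
  rw [hd1, d1, ((hphase x).sin.const_mul _).deriv, cosWave]
  ring

lemma lap_cosWave (k : Fin 2 → ℤ) : lap (cosWave k) = fun x => lapEigenvalue k * cosWave k x := by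
  ext x
  have hswap : cosWave ![k 1, k 0] x.swap = cosWave k x :=
    (congrFun (cosWave_comp_swap k) x.swap).symm
  simp only [lap_eq_d1_d1_add_comp_swap, cosWave_comp_swap, d1_d1_cosWave,
    Function.comp_apply, hswap, lapEigenvalue, Matrix.cons_val_zero]
  ring

lemma setIntegral_T2_cosWave_eq_zero {k : Fin 2 → ℤ} (hk : k ≠ 0) :
    ∫ x in T2, cosWave k x = 0 := by
  have hint : IntegrableOn (fun x => mFourier k (toTorus x)) T2 :=
    integrableOn_T2 ((map_continuous (mFourier k)).comp continuous_toTorus)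
  have h := integral_mFourier_eq_zero hk
  rw [integral_unitAddTorus_eq_setIntegral_T2] at h
  simp only [← re_mFourier_toTorus]
  exact (integral_re hint).trans (congrArg Complex.re h)

section CosPoly

variable (S : Finset (Fin 2 → ℤ)) (a : (Fin 2 → ℤ) → ℝ)

lemma periodic2_cosPoly : Periodic2 (cosPoly S a) := fun x n => by
  simp only [cosPoly, periodic2_cosWave _ x n]

lemma contDiff_cosPoly {n : WithTop ℕ∞} : ContDiff ℝ n (cosPoly S a) :=
  ContDiff.sum fun k _ => contDiff_const.mul (contDiff_cosWave k)

lemma cosPoly_apply_zero : cosPoly S a 0 = ∑ k ∈ S, a k := by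
  simp [cosPoly, cosWave]

lemma lap_cosPoly : lap (cosPoly S a) = cosPoly S fun k => lapEigenvalue k * a k := by
  have h := lap_sum (S := S) (f := fun k x => a k * cosWave k x) fun k _ =>
    contDiff_const.mul (contDiff_cosWave k)
  ext x
  refine (congrFun h x).trans (Finset.sum_congr rfl fun k _ => ?_)
  rw [lap_const_mul, lap_cosWave]
  ring

variable {a} in
lemma meanT2_cosPoly (ha : a 0 = 0) : meanT2 (cosPoly S a) = 0 := by
  have hint : ∀ k ∈ S, IntegrableOn (fun x => a k * cosWave k x) T2 := fun k _ =>
    integrableOn_T2 (continuous_const.mul (contDiff_cosWave k (n := 0)).continuous)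
  simp only [meanT2, cosPoly]
  rw [integral_finsetSum S hint]
  refine Finset.sum_eq_zero fun k _ => ?_
  rw [integral_const_mul]
  rcases eq_or_ne k 0 with rfl | hk
  · rw [ha, zero_mul]
  · rw [setIntegral_T2_cosWave_eq_zero hk, mul_zero]

-- Equality requires the exponential polynomial with coefficients `a` on `S` to be real.
lemma L2normSq_cosPoly_le : L2normSq (cosPoly S a) ≤ ∑ k ∈ S, a k ^ 2 := by
  let P : C(UnitAddTorus (Fin 2), ℂ) := ∑ k ∈ S, (a k : ℂ) • mFourier k
  have hP : Continuous fun x => P (toTorus x) := (map_continuous P).comp continuous_toTorus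
  have hre : ∀ x, (P (toTorus x)).re = cosPoly S a x := fun x => by
    simp [P, cosPoly, re_mFourier_toTorus]
  calc L2normSq (cosPoly S a) = ∫ x in T2, (P (toTorus x)).re ^ 2 := by simp only [hre, L2normSq]
    _ ≤ ∫ x in T2, ‖P (toTorus x)‖ ^ 2 :=
        setIntegral_mono (integrableOn_T2 ((Complex.continuous_re.comp hP).pow 2))
          (integrableOn_T2 (hP.norm.pow 2)) fun x =>
            sq_le_sq.mpr ((Complex.abs_re_le_norm _).trans (le_abs_self _))
    _ = ∑ k ∈ S, a k ^ 2 := by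
        rw [← integral_unitAddTorus_eq_setIntegral_T2 fun t => ‖P t‖ ^ 2,
          integral_norm_sq_sum_smul_mFourier]
        simp

end CosPoly

lemma L2normSq_lap_cosPoly_inv_sq_le (S : Finset (Fin 2 → ℤ)) :
    L2normSq (lap (cosPoly S fun k => (lapEigenvalue k ^ 2)⁻¹)) ≤
      ∑ k ∈ S, (lapEigenvalue k ^ 2)⁻¹ := by
  rw [lap_cosPoly]
  refine (L2normSq_cosPoly_le S _).trans_eq (Finset.sum_congr rfl fun k _ => ?_)
  rcases eq_or_ne (lapEigenvalue k) 0 with hk | hk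
  · simp [hk]
  · field_simp

lemma sqrt_tsum_inv_sq_lapEigenvalue_le {C : ℝ}
    (hC : ∀ f : ℝ × ℝ → ℝ, Periodic2 f → ContDiff ℝ 2 f →
      ∀ x : ℝ × ℝ, |f x - meanT2 f| ≤ C * √(L2normSq (lap f))) :
    √(∑' k, (lapEigenvalue k ^ 2)⁻¹) ≤ C := by
  set w : (Fin 2 → ℤ) → ℝ := fun k => (lapEigenvalue k ^ 2)⁻¹ with hw
  have hw_nonneg : ∀ k, 0 ≤ w k := fun k => by positivity
  have hw_zero : w 0 = 0 := by simp [hw, lapEigenvalue]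
  have hw_one : 0 < w 1 := inv_pos.mpr (sq_pos_of_ne_zero (lapEigenvalue_ne_zero one_ne_zero))
  have htest : ∀ S, ∑ k ∈ S, w k ≤ C * √(L2normSq (lap (cosPoly S w))) := fun S => by
    have h := hC (cosPoly S w) (periodic2_cosPoly S w) (contDiff_cosPoly S w) 0
    rw [meanT2_cosPoly S hw_zero, cosPoly_apply_zero, sub_zero] at h
    exact (le_abs_self _).trans h
  have hC_nonneg : 0 ≤ C := by
    have h := hw_one.trans_le ((Finset.sum_singleton w 1).symm.trans_le (htest {1}))
    exact (pos_of_mul_pos_left h (Real.sqrt_nonneg _)).le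
  have htsum : ∑' k, w k ≤ C * √(∑' k, w k) :=
    Real.tsum_le_of_sum_le hw_nonneg fun S => (htest S).trans <| by
      gcongr
      exact (L2normSq_lap_cosPoly_inv_sq_le S).trans
        (summable_inv_sq_lapEigenvalue.sum_le_tsum S fun k _ => hw_nonneg k)
  have hpos : 0 < ∑' k, w k := summable_inv_sq_lapEigenvalue.tsum_pos hw_nonneg 1 hw_one
  refine le_of_mul_le_mul_right ?_ (Real.sqrt_pos.mpr hpos)
  rwa [Real.mul_self_sqrt hpos.le]

/-- The optimal constant in `‖η − η̄‖_{L∞} ≤ C_S ‖Δη‖_{L²}` on `T²` is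
`C_S = (2π)⁻² (∑_{k ∈ ℤ²\{0}} |k|⁻⁴)^{1/2}`. -/
theorem optimal_constant_CS :
    (∀ η : ℝ × ℝ → ℝ, Periodic2 η → ContDiff ℝ 2 η →
      ∀ x : ℝ × ℝ, |η x - meanT2 η| ≤
        ((2 * Real.pi) ^ 2)⁻¹ * Real.sqrt latticeSum * Real.sqrt (L2normSq (lap η))) ∧
    (∀ C : ℝ,
      (∀ η : ℝ × ℝ → ℝ, Periodic2 η → ContDiff ℝ 2 η →
        ∀ x : ℝ × ℝ, |η x - meanT2 η| ≤ C * Real.sqrt (L2normSq (lap η))) →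
      ((2 * Real.pi) ^ 2)⁻¹ * Real.sqrt latticeSum ≤ C) := by
  rw [← sqrt_tsum_inv_sq_lapEigenvalue]
  exact ⟨fun _ hper hη => abs_sub_meanT2_le hper hη,
    fun _ hC => sqrt_tsum_inv_sq_lapEigenvalue_le hC⟩
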